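/- The 14 explicit vectors a, c_s, e_s, f, b_s, d_s (s = 1,2,3) are roots of L = 3E₈⊕H (i.e. each has norm −2), and their Gram matrix realizes the incidence graph of P²(𝔽₂): for a point x and a line l, ⟨x,l⟩ = p if x and l are incident and ⟨x,l⟩ = 0 otherwise, while any two distinct points are orthogonal and any two distinct lines are orthogonal. Consequently the i-reflections in two of these roots braid if the corresponding nodes are joined in the incidence graph and commute otherwise. -/

import Mathlib

/- Formalization over the ring ℋ of Hurwitz integers inside the real quaternions. -/

noncomputable section
open Quaternion Finset

/-- The real quaternions ℍ. -/
abbrev Quat := Quaternion ℝ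

/-- The quaternion `i`. -/
def qi : Quat := ⟨0, 1, 0, 0⟩
/-- The quaternion `j`. -/
def qj : Quat := ⟨0, 0, 1, 0⟩
/-- The quaternion `k`. -/
def qk : Quat := ⟨0, 0, 0, 1⟩
/-- `p = 1 - i`. -/
def qp : Quat := 1 - qi

/-- A quaternion is a Hurwitz integer if it is `(a+bi+cj+dk)/2` with
`a,b,c,d` integers which are all congruent mod `2`. -/
def IsHurwitz (q : Quat) : Prop :=
  ∃ a b c d : ℤ, a % 2 = b % 2 ∧ b % 2 = c % 2 ∧ c % 2 = d % 2 ∧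
    q = ⟨(a : ℝ) / 2, (b : ℝ) / 2, (c : ℝ) / 2, (d : ℝ) / 2⟩

/-- A unit of the ring ℋ of Hurwitz integers. -/
def IsUnitH (q : Quat) : Prop :=
  IsHurwitz q ∧ ∃ r : Quat, IsHurwitz r ∧ q * r = 1 ∧ r * q = 1

/-- Membership in the (two-sided) ideal `pℋ`. -/
def InPH (q : Quat) : Prop := ∃ h : Quat, IsHurwitz h ∧ q = qp * h

/-- The ambient space of the lattice `L = 3E₈ ⊕ H`: three pairs (the `E₈` summands)
together with the two coordinates of the hyperbolic cell `H`. -/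
abbrev V3 : Type := (Fin 3 → Quat × Quat) × Quat × Quat

/-- The ℋ-valued form on `3E₈ ⊕ H`:  negative definite standard form on each `E₈`
summand and the hyperbolic form `⟨(x₁,x₂),(y₁,y₂)⟩ = x̄₁ p̄ y₂ + x̄₂ p y₁` on `H`. -/
def ip3 (x y : V3) : Quat :=
  (∑ s : Fin 3, (-(star (x.1 s).1 * (y.1 s).1) - star (x.1 s).2 * (y.1 s).2))
    + star x.2.1 * star qp * y.2.2 + star x.2.2 * qp * y.2.1

/-- Membership in the `E₈` lattice: both coordinates Hurwitz and congruent mod `pℋ`. -/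
def memE8 (q : Quat × Quat) : Prop := IsHurwitz q.1 ∧ IsHurwitz q.2 ∧ InPH (q.1 - q.2)

/-- Membership in the lattice `L = 3E₈ ⊕ H`. -/
def memL3 (v : V3) : Prop := (∀ s, memE8 (v.1 s)) ∧ IsHurwitz v.2.1 ∧ IsHurwitz v.2.2

/-- Right scalar multiplication on the ambient space of `3E₈ ⊕ H`. -/
def rmul3 (v : V3) (q : Quat) : V3 :=
  (fun s => ((v.1 s).1 * q, (v.1 s).2 * q), v.2.1 * q, v.2.2 * q)

/-- The `μ`-reflection in a root `r` : `v ↦ v − r(1−μ)⟨r,v⟩/|r|²`. -/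
def refl3 (r : V3) (μ : Quat) (v : V3) : V3 := v - rmul3 r ((1 - μ) * ip3 r v / ip3 r r)

/-- The root `a` of the diagram `D`. -/
def rootA : V3 := (fun _ => (0, 0), 1, -1)
/-- The roots `c_s` of the diagram `D`. -/
def rootC (s : Fin 3) : V3 := (fun t => if t = s then ((1 : Quat), (-1 : Quat)) else 0, 0, 0)
/-- The roots `e_s` of the diagram `D` (with `(1,1)` in the two other `E₈` slots). -/
def rootE (s : Fin 3) : V3 := (fun t => if t = s then (0 : Quat × Quat) else (1, 1), -qi, -1)
/-- The root `f` of the diagram `D`. -/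
def rootF : V3 := (fun _ => (0, qp), -(qi * qp), -qp)
/-- The roots `b_s` of the diagram `D`. -/
def rootB (s : Fin 3) : V3 := (fun t => if t = s then ((0 : Quat), qp) else 0, -1, 0)
/-- The roots `d_s` of the diagram `D`. -/
def rootD (s : Fin 3) : V3 := (fun t => if t = s then (-qp, (0 : Quat)) else 0, 0, 0)

/-- The set of roots of `L`. -/
def Roots3 : Set V3 := {r | memL3 r ∧ ip3 r r = -2}

/-- The reflection group `R(L)` of `L = 3E₈ ⊕ H`, as the subgroup of permutations of the
ambient space generated by the `μ`-reflections in all roots of `L` (for all units `μ ≠ 1`). -/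
def RL3 : Subgroup (Equiv.Perm V3) :=
  Subgroup.closure {g | ∃ r μ, r ∈ Roots3 ∧ IsUnitH μ ∧ μ ≠ 1 ∧ ∀ v, g v = refl3 r μ v}

/-- The seven `points` of the diagram `D`. -/
def Pt : Fin 7 → V3 := ![rootA, rootC 0, rootC 1, rootC 2, rootE 0, rootE 1, rootE 2]
/-- The seven `lines` of the diagram `D`. -/
def Ln : Fin 7 → V3 := ![rootF, rootB 0, rootB 1, rootB 2, rootD 0, rootD 1, rootD 2]

/-- Incidence: the point `Pt t` lies on the line `Ln s` iff `⟨Pt t, Ln s⟩ = p`. -/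
def Inc (t s : Fin 7) : Prop := ip3 (Pt t) (Ln s) = qp

/-- `p / 2`. -/
def qc : Quat := ⟨1 / 2, -1 / 2, 0, 0⟩
@[simp] lemma qi_re : qi.re = 0 := rfl
@[simp] lemma qi_imI : qi.imI = 1 := rfl
@[simp] lemma qi_imJ : qi.imJ = 0 := rfl
@[simp] lemma qi_imK : qi.imK = 0 := rfl
@[simp] lemma qc_re : qc.re = (1 / 2) := rfl
@[simp] lemma qc_imI : qc.imI = (-1 / 2) := rfl
@[simp] lemma qc_imJ : qc.imJ = 0 := rfl
@[simp] lemma qc_imK : qc.imK = 0 := rfl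
@[simp] lemma qp_re : qp.re = 1 := by simp [qp]
@[simp] lemma qp_imI : qp.imI = -1 := by simp [qp]
@[simp] lemma qp_imJ : qp.imJ = 0 := by simp [qp]
@[simp] lemma qp_imK : qp.imK = 0 := by simp [qp]
lemma quat_two : (2 : Quat) = 1 + 1 := by norm_num
lemma quat_three : (3 : Quat) = 1 + 1 + 1 := by norm_num
@[simp] lemma two_re : (2 : Quat).re = 2 := by rw [quat_two]; simp; norm_num
@[simp] lemma two_imI : (2 : Quat).imI = 0 := by rw [quat_two]; simp
@[simp] lemma two_imJ : (2 : Quat).imJ = 0 := by rw [quat_two]; simp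
@[simp] lemma two_imK : (2 : Quat).imK = 0 := by rw [quat_two]; simp

/-- incidence table -/
def incT : Fin 7 → Fin 7 → Bool :=
  ![![false, true, true, true, false, false, false],
    ![true, true, false, false, true, false, false],
    ![true, false, true, false, false, true, false],
    ![true, false, false, true, false, false, true],
    ![false, true, false, false, false, true, true],
    ![false, false, true, false, true, false, true],
    ![false, false, false, true, true, true, false]]

lemma ip_add (r v w : V3) : ip3 r (v + w) = ip3 r v + ip3 r w := by
  simp only [ip3, Fin.sum_univ_three, Prod.fst_add, Prod.snd_add, Pi.add_apply]
  noncomm_ring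

lemma ip_rmul (r s : V3) (q : Quat) : ip3 r (rmul3 s q) = ip3 r s * q := by
  simp only [ip3, rmul3, Fin.sum_univ_three]
  noncomm_ring

lemma ip_star (r s : V3) : star (ip3 r s) = ip3 s r := by
  simp only [ip3, Fin.sum_univ_three, star_add, star_sub, star_neg, star_mul, star_star, mul_assoc]
  abel

lemma rmul_add (r : V3) (p q : Quat) : rmul3 r (p + q) = rmul3 r p + rmul3 r q := by
  ext1
  · funext s; simp [rmul3, mul_add]
  · simp [rmul3, mul_add]


lemma div_neg_two (a : Quat) : (1 - qi) * a / (-2) = -(qc * a) := by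
  have h2 : (-2 : Quat) ≠ 0 := by
    intro h
    have := congrArg QuaternionAlgebra.re h
    norm_num at this
  rw [div_eq_iff h2]
  have h : (1 - qi) = qc * 2 := by
    ext <;> simp <;> norm_num
  rw [h]
  noncomm_ring

lemma refl_eq (r v : V3) (h : ip3 r r = -2) :
    refl3 r qi v = v + rmul3 r (qc * ip3 r v) := by
  rw [refl3, h, div_neg_two, sub_eq_add_neg]
  congr 1
  ext1
  · funext s; simp [rmul3]
  · simp [rmul3]

lemma refl_comm (x l v : V3) (hx : ip3 x x = -2) (hl : ip3 l l = -2) (h : ip3 x l = 0) :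
    refl3 x qi (refl3 l qi v) = refl3 l qi (refl3 x qi v) := by
  have h' : ip3 l x = 0 := by rw [← ip_star, h, star_zero]
  simp only [refl_eq, hx, hl, ip_add, ip_rmul, h, h', zero_mul, add_zero]
  abel

lemma refl_braid (x l v : V3) (hx : ip3 x x = -2) (hl : ip3 l l = -2) (h : ip3 x l = qp) :
    refl3 x qi (refl3 l qi (refl3 x qi v)) = refl3 l qi (refl3 x qi (refl3 l qi v)) := by
  have h' : ip3 l x = star qp := by rw [← ip_star, h]
  have e1 : qc * (-2) = qi - 1 := by
    ext <;> simp <;> norm_num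
  have e1' : ∀ a, (-2 : Quat) * (qc * a) = (qi - 1) * a := by
    intro a; rw [← e1]; noncomm_ring
  have e2 : ∀ a, star qp * (qc * a) = a := by
    intro a
    have : star qp * qc = 1 := by ext <;> simp <;> norm_num
    rw [← mul_assoc, this, one_mul]
  have e3 : ∀ a, qp * (qc * a) = -(qi * a) := by
    intro a
    have : qp * qc = -qi := by ext <;> simp <;> norm_num
    rw [← mul_assoc, this, neg_mul]
  have e4 : ∀ a, qi * (qi * a) = -a := by
    intro a
    have : qi * qi = -1 := by ext <;> simp
    rw [← mul_assoc, this, neg_mul, one_mul]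
  have key : ∀ α β γ δ ε ζ : Quat, α + β = γ → δ = ε + ζ →
      v + rmul3 x α + rmul3 l δ + rmul3 x β = v + rmul3 l ε + rmul3 x γ + rmul3 l ζ := by
    intro α β γ δ ε ζ h1 h2
    rw [← h1, h2, rmul_add, rmul_add]; abel
  simp only [refl_eq, hx, hl, ip_add, ip_rmul, h, h', e1', e2, e3]
  apply key
  · rw [← mul_add]; congr 1
    simp only [mul_add, sub_mul, one_mul]; abel
  · rw [← mul_add]; congr 1
    simp only [mul_add, sub_mul, one_mul, mul_neg, e4]; abel

set_option maxHeartbeats 4000000 in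
lemma ip_pt_ln (t s : Fin 7) : ip3 (Pt t) (Ln s) = if incT t s then qp else 0 := by
  fin_cases t <;> fin_cases s <;>
    simp [ip3, Pt, Ln, incT, rootA, rootC, rootE, rootF, rootB, rootD, Fin.sum_univ_three] <;>
    ext <;> simp <;> norm_num

set_option maxHeartbeats 4000000 in
lemma ip_pt_pt (t s : Fin 7) : ip3 (Pt t) (Pt s) = if t = s then -2 else 0 := by
  fin_cases t <;> fin_cases s <;>
    simp [ip3, Pt, rootA, rootC, rootE, Fin.sum_univ_three] <;>
    ext <;> simp <;> norm_num

set_option maxHeartbeats 4000000 in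
lemma ip_ln_ln (t s : Fin 7) : ip3 (Ln t) (Ln s) = if t = s then -2 else 0 := by
  fin_cases t <;> fin_cases s <;>
    simp [ip3, Ln, rootF, rootB, rootD, Fin.sum_univ_three] <;>
    ext <;> simp [quat_three] <;> norm_num

lemma hz_neg {q : Quat} (h : IsHurwitz q) : IsHurwitz (-q) := by
  obtain ⟨a, b, c, d, h1, h2, h3, rfl⟩ := h
  refine ⟨-a, -b, -c, -d, by omega, by omega, by omega, ?_⟩
  have e : ∀ x y z w : ℝ, -(⟨x, y, z, w⟩ : Quat) = ⟨-x, -y, -z, -w⟩ := fun _ _ _ _ => rfl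
  refine (e _ _ _ _).trans ?_
  push_cast
  simp only [neg_div]
lemma hz0 : IsHurwitz 0 := ⟨0, 0, 0, 0, rfl, rfl, rfl, by ext <;> simp⟩
lemma hz1 : IsHurwitz 1 := ⟨2, 0, 0, 0, rfl, rfl, rfl, by ext <;> simp⟩
lemma hzi : IsHurwitz qi := ⟨0, 2, 0, 0, rfl, rfl, rfl, by ext <;> simp⟩
lemma hzp : IsHurwitz qp := ⟨2, -2, 0, 0, rfl, rfl, rfl, by ext <;> simp⟩
lemma hzip : IsHurwitz (qi * qp) := ⟨2, 2, 0, 0, rfl, rfl, rfl, by ext <;> simp⟩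
lemma hz1i : IsHurwitz (1 + qi) := ⟨2, 2, 0, 0, rfl, rfl, rfl, by ext <;> simp⟩

lemma mem0 : memE8 (0, 0) := ⟨hz0, hz0, 0, hz0, by simp⟩
lemma mem0' : memE8 0 := mem0
lemma mem1 : memE8 (1, 1) := ⟨hz1, hz1, 0, hz0, by simp⟩
lemma mem2 : memE8 (1, -1) := ⟨hz1, hz_neg hz1, 1 + qi, hz1i, by
  ext <;> simp <;> norm_num⟩
lemma mem3 : memE8 (0, qp) := ⟨hz0, hzp, -1, hz_neg hz1, by simp⟩
lemma mem4 : memE8 (-qp, 0) := ⟨hz_neg hzp, hz0, -1, hz_neg hz1, by simp⟩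

lemma memA : memL3 rootA := ⟨fun _ => mem0, hz1, hz_neg hz1⟩
lemma memF : memL3 rootF := ⟨fun _ => mem3, hz_neg hzip, hz_neg hzp⟩
lemma memC (s) : memL3 (rootC s) := ⟨fun t => by
  simp only [rootC]; split_ifs; exacts [mem2, mem0'], hz0, hz0⟩
lemma memE (s) : memL3 (rootE s) := ⟨fun t => by
  simp only [rootE]; split_ifs; exacts [mem0', mem1], hz_neg hzi, hz_neg hz1⟩
lemma memB (s) : memL3 (rootB s) := ⟨fun t => by
  simp only [rootB]; split_ifs; exacts [mem3, mem0'], hz_neg hz1, hz0⟩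
lemma memD (s) : memL3 (rootD s) := ⟨fun t => by
  simp only [rootD]; split_ifs; exacts [mem4, mem0'], hz0, hz0⟩

lemma memPt (t) : memL3 (Pt t) := by
  fin_cases t
  exacts [memA, memC 0, memC 1, memC 2, memE 0, memE 1, memE 2]
lemma memLn (t) : memL3 (Ln t) := by
  fin_cases t
  exacts [memF, memB 0, memB 1, memB 2, memD 0, memD 1, memD 2]

lemma qp_ne : qp ≠ 0 := by
  intro h
  have := congrArg QuaternionAlgebra.re h
  simp at this
lemma two_ne : (0 : Quat) ≠ -2 := by
  intro h
  have := congrArg QuaternionAlgebra.re h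
  norm_num at this
lemma qp_ne_two : qp ≠ -2 := by
  intro h
  have := congrArg QuaternionAlgebra.imI h
  simp at this

lemma inc_iff (t s : Fin 7) : Inc t s ↔ incT t s = true := by
  rw [Inc, ip_pt_ln]
  split_ifs with h
  · simp [h]
  · simp [h, qp_ne.symm]

/-- The 14 explicit vectors are roots of `L = 3E₈ ⊕ H`, their Gram
matrix realizes the incidence graph of `P²(𝔽₂)` (point–line inner products are `p` or
`0`, distinct points are orthogonal, distinct lines are orthogonal, and the incidence
relation satisfies the axioms of the projective plane of order 2), and the
`i`-reflections in two of these roots braid when the nodes are joined and commute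
otherwise. -/
theorem diagram_realizes_incidence_graph_of_P2F2 :
    (∀ t : Fin 7, memL3 (Pt t) ∧ ip3 (Pt t) (Pt t) = -2) ∧
    (∀ s : Fin 7, memL3 (Ln s) ∧ ip3 (Ln s) (Ln s) = -2) ∧
    Function.Injective Pt ∧ Function.Injective Ln ∧ (∀ t s, Pt t ≠ Ln s) ∧
    (∀ t s, ip3 (Pt t) (Ln s) = qp ∨ ip3 (Pt t) (Ln s) = 0) ∧
    (∀ t t', t ≠ t' → ip3 (Pt t) (Pt t') = 0) ∧
    (∀ s s', s ≠ s' → ip3 (Ln s) (Ln s') = 0) ∧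
    (∀ t t', t ≠ t' → ∃! s, Inc t s ∧ Inc t' s) ∧
    (∀ s s', s ≠ s' → ∃! t, Inc t s ∧ Inc t s') ∧
    (∀ s, ∃ t₁ t₂ t₃ : Fin 7, t₁ ≠ t₂ ∧ t₁ ≠ t₃ ∧ t₂ ≠ t₃ ∧
      (∀ t, Inc t s ↔ t = t₁ ∨ t = t₂ ∨ t = t₃)) ∧
    (∀ t, ∃ s₁ s₂ s₃ : Fin 7, s₁ ≠ s₂ ∧ s₁ ≠ s₃ ∧ s₂ ≠ s₃ ∧
      (∀ s, Inc t s ↔ s = s₁ ∨ s = s₂ ∨ s = s₃)) ∧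
    (∀ t s, Inc t s → ∀ v, refl3 (Pt t) qi (refl3 (Ln s) qi (refl3 (Pt t) qi v))
        = refl3 (Ln s) qi (refl3 (Pt t) qi (refl3 (Ln s) qi v))) ∧
    (∀ t s, ¬ Inc t s → ∀ v, refl3 (Pt t) qi (refl3 (Ln s) qi v)
        = refl3 (Ln s) qi (refl3 (Pt t) qi v)) ∧
    (∀ t t', t ≠ t' → ∀ v, refl3 (Pt t) qi (refl3 (Pt t') qi v)
        = refl3 (Pt t') qi (refl3 (Pt t) qi v)) ∧
    (∀ s s', s ≠ s' → ∀ v, refl3 (Ln s) qi (refl3 (Ln s') qi v)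
        = refl3 (Ln s') qi (refl3 (Ln s) qi v)) := by
  have hP : ∀ t, ip3 (Pt t) (Pt t) = -2 := fun t => by simp [ip_pt_pt]
  have hL : ∀ t, ip3 (Ln t) (Ln t) = -2 := fun t => by simp [ip_ln_ln]
  have hPP : ∀ t t', t ≠ t' → ip3 (Pt t) (Pt t') = 0 := fun t t' h => by simp [ip_pt_pt, h]
  have hLL : ∀ t t', t ≠ t' → ip3 (Ln t) (Ln t') = 0 := fun t t' h => by simp [ip_ln_ln, h]
  have hPL : ∀ t s, ip3 (Pt t) (Ln s) = qp ∨ ip3 (Pt t) (Ln s) = 0 := fun t s => by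
    rw [ip_pt_ln]; split_ifs <;> simp
  refine ⟨fun t => ⟨memPt t, hP t⟩, fun t => ⟨memLn t, hL t⟩, ?_, ?_, ?_, hPL, hPP, hLL,
    ?_, ?_, ?_, ?_, ?_, ?_, ?_, ?_⟩
  · intro t t' h
    by_contra hne
    have := hPP t t' hne
    rw [← h, hP] at this
    exact two_ne this.symm
  · intro t t' h
    by_contra hne
    have := hLL t t' hne
    rw [← h, hL] at this
    exact two_ne this.symm
  · intro t s h
    have := hPL t s
    rw [← h, hP] at this
    rcases this with h | h
    exacts [qp_ne_two h.symm, two_ne h.symm]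
  · simp only [inc_iff, ExistsUnique]; decide
  · simp only [inc_iff, ExistsUnique]; decide
  · simp only [inc_iff]; decide
  · simp only [inc_iff]; decide
  · exact fun t s h v => refl_braid _ _ v (hP t) (hL s) h
  · exact fun t s h v => refl_comm _ _ v (hP t) (hL s) ((hPL t s).resolve_left h)
  · exact fun t s h v => refl_comm _ _ v (hP t) (hP s) (hPP t s h)
  · exact fun t s h v => refl_comm _ _ v (hL t) (hL s) (hLL t s h)
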